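/- Let b ∈ GL_n(E) be an invertible block upper-triangular matrix (i.e. b ∈ 𝔭_{S_0} and b is invertible). Then: (i) 𝔭_{S_0} ∩ Ad_b(𝔟̄) = Ad_b(𝔩_{S_0} ∩ 𝔟̄); (ii) (𝔷_{S_0} + 𝔫_{S_0}) ∩ Ad_b(𝔟̄) = Ad_b(𝔷_{S_0}). Equivalently, for g = b w_0 one has 𝔭_{S_0} ∩ Ad_g(𝔟) = Ad_b(𝔩_{S_0} ∩ 𝔟̄) and (𝔷_{S_0} + 𝔫_{S_0}) ∩ Ad_g(𝔟) = Ad_b(𝔷_{S_0}). (These are the intersection formulas at a non-critical point: Ad_u(𝔭_{S_0,σ}) ∩ Ad_{g_σ}(𝔟_σ) = Ad_{u b_σ(u)}(𝔩_{S_0,σ} ∩ 𝔟̄_σ) and Ad_u(τ_{S_0,σ}) ∩ Ad_{g_σ}(𝔟_σ) = Ad_{u b_σ(u)}(𝔷_{S_0,σ}).) -/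

import Mathlib

open Matrix

/-- The `E`-subspace of `n × n` matrices supported on the entries `(i, j)` where `P i j` holds. -/
def entrySub (E : Type*) [Field E] (n : ℕ) (P : Fin n → Fin n → Prop) :
    Submodule E (Matrix (Fin n) (Fin n) E) where
  carrier := {M | ∀ i j, ¬ P i j → M i j = 0}
  add_mem' := by
    intro M N hM hN i j hij
    simp only [Matrix.add_apply, hM i j hij, hN i j hij, add_zero]
  zero_mem' := by
    intro i j _
    simp
  smul_mem' := by
    intro c M hM i j hij
    simp only [Matrix.smul_apply, hM i j hij, smul_zero]

/-- The Borel subalgebra `𝔟` of upper-triangular matrices. -/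
def upperTri (E : Type*) [Field E] (n : ℕ) : Submodule E (Matrix (Fin n) (Fin n) E) :=
  entrySub E n fun i j => i ≤ j

/-- The opposite Borel subalgebra `𝔟̄` of lower-triangular matrices. -/
def lowerTri (E : Type*) [Field E] (n : ℕ) : Submodule E (Matrix (Fin n) (Fin n) E) :=
  entrySub E n fun i j => j ≤ i

/-- `𝔭_{S_0} = {M : M_{mk} = 0 whenever β(m) > β(k)}`, the standard block upper-triangular
(parabolic) subalgebra. -/
def parab (E : Type*) [Field E] {n s : ℕ} (β : Fin n → Fin s) :
    Submodule E (Matrix (Fin n) (Fin n) E) :=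
  entrySub E n fun i j => β i ≤ β j

/-- `𝔩_{S_0} = {M : M_{mk} = 0 whenever β(m) ≠ β(k)}`, the block-diagonal (Levi) subalgebra. -/
def levi (E : Type*) [Field E] {n s : ℕ} (β : Fin n → Fin s) :
    Submodule E (Matrix (Fin n) (Fin n) E) :=
  entrySub E n fun i j => β i = β j

/-- `𝔫_{S_0} = {M : M_{mk} = 0 unless β(m) < β(k)}`, the nilpotent radical of `𝔭_{S_0}`. -/
def nilrad (E : Type*) [Field E] {n s : ℕ} (β : Fin n → Fin s) :
    Submodule E (Matrix (Fin n) (Fin n) E) :=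
  entrySub E n fun i j => β i < β j

/-- The linear map `(c : Fin s → E) ↦ diagonal (c ∘ β)`. -/
def blockDiagMap (E : Type*) [Field E] {n s : ℕ} (β : Fin n → Fin s) :
    (Fin s → E) →ₗ[E] Matrix (Fin n) (Fin n) E where
  toFun c := Matrix.diagonal fun m => c (β m)
  map_add' c c' := by
    ext i j
    by_cases h : i = j <;>
      simp [Matrix.diagonal_apply, Matrix.add_apply, h]
  map_smul' t c := by
    ext i j
    by_cases h : i = j <;>
      simp [Matrix.diagonal_apply, Matrix.smul_apply, h]

/-- `𝔷_{S_0}`, the diagonal matrices whose diagonal entries are constant on each block. -/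
def centerLevi (E : Type*) [Field E] {n s : ℕ} (β : Fin n → Fin s) :
    Submodule E (Matrix (Fin n) (Fin n) E) :=
  LinearMap.range (blockDiagMap E β)

/-- `Ad_g(W) = g W g⁻¹`. -/
noncomputable def adConj {E : Type*} [Field E] {n : ℕ} (g : Matrix (Fin n) (Fin n) E)
    (W : Submodule E (Matrix (Fin n) (Fin n) E)) : Submodule E (Matrix (Fin n) (Fin n) E) :=
  W.map ((LinearMap.mulLeft E g).comp (LinearMap.mulRight E g⁻¹))

/-- The antidiagonal permutation matrix `w₀`, with `(w₀)_{m, n+1−m} = 1`. -/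
def w0Mat (E : Type*) [Field E] (n : ℕ) : Matrix (Fin n) (Fin n) E :=
  Matrix.of fun i j => if j = i.rev then 1 else 0

/-!
If `b` normalizes a subspace `W`, then `W ∩ Ad_b(𝔟̄) = Ad_b(W ∩ 𝔟̄)`, so conjugation by `b` can be
removed from both formulas. An invertible `b ∈ 𝔭` normalizes `𝔭`; it also normalizes `𝔷 + 𝔫`,
because `𝔫` is a two-sided ideal of `𝔭` and `[𝔭, 𝔷] ⊆ 𝔫`. What remains is `𝔭 ∩ 𝔟̄ = 𝔩 ∩ 𝔟̄` and, by
the modular law, `(𝔷 + 𝔫) ∩ 𝔟̄ = 𝔷 + (𝔫 ∩ 𝔟̄) = 𝔷`. Finally `Ad_{w₀}(𝔟) = 𝔟̄`.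
-/

section MatrixConj

variable {ι R : Type*} [Fintype ι] [DecidableEq ι] [CommRing R]

theorem injective_mulLeft_comp_mulRight_inv {g : Matrix ι ι R} (hg : IsUnit g.det) :
    Function.Injective ((LinearMap.mulLeft R g).comp (LinearMap.mulRight R g⁻¹)) := by
  have hg' : IsUnit g := (Matrix.isUnit_iff_isUnit_det g).2 hg
  exact hg'.mul_right_injective.comp (Matrix.isUnit_nonsing_inv_iff.2 hg').mul_left_injective

theorem permMatrix_mul_mul_inv (σ : Equiv.Perm ι) (M : Matrix ι ι R) :
    σ.permMatrix R * M * (σ.permMatrix R)⁻¹ = M.submatrix σ σ := by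
  have hinv : (σ.permMatrix R)⁻¹ = σ⁻¹.permMatrix R :=
    Matrix.inv_eq_right_inv (by rw [← Matrix.permMatrix_mul, inv_mul_cancel, Matrix.permMatrix_one])
  rw [hinv, PEquiv.toMatrix_toPEquiv_mul, PEquiv.mul_toMatrix_toPEquiv]
  rfl

end MatrixConj

section EntrySub

variable {E : Type*} [Field E] {n : ℕ} {P Q R : Fin n → Fin n → Prop}
  {A B : Matrix (Fin n) (Fin n) E}

theorem mem_entrySub : A ∈ entrySub E n P ↔ ∀ i j, ¬ P i j → A i j = 0 :=
  Iff.rfl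

theorem entrySub_mono (h : ∀ i j, P i j → Q i j) : entrySub E n P ≤ entrySub E n Q :=
  fun _ hM i j hQ => hM i j (mt (h i j) hQ)

theorem entrySub_inf (P Q : Fin n → Fin n → Prop) :
    entrySub E n P ⊓ entrySub E n Q = entrySub E n fun i j => P i j ∧ Q i j := by
  refine le_antisymm (fun M hM i j hPQ => ?_) (le_inf ?_ ?_)
  · by_cases hP : P i j
    · exact hM.2 i j fun hQ => hPQ ⟨hP, hQ⟩
    · exact hM.1 i j hP
  · exact entrySub_mono fun _ _ => And.left
  · exact entrySub_mono fun _ _ => And.right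

theorem entrySub_eq_bot (h : ∀ i j, ¬ P i j) : entrySub E n P = ⊥ :=
  (Submodule.eq_bot_iff _).2 fun _ hM => Matrix.ext fun i j => hM i j (h i j)

theorem mul_mem_entrySub (h : ∀ i k j, P i k → Q k j → R i j)
    (hA : A ∈ entrySub E n P) (hB : B ∈ entrySub E n Q) : A * B ∈ entrySub E n R := by
  intro i j hR
  rw [Matrix.mul_apply]
  refine Finset.sum_eq_zero fun k _ => ?_
  by_cases hP : P i k
  · rw [hB k j fun hQ => hR (h i k j hP hQ), mul_zero]
  · rw [hA i k hP, zero_mul]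

end EntrySub

section AdConj

variable {E : Type*} [Field E] {n : ℕ} {g : Matrix (Fin n) (Fin n) E}
  {V W : Submodule E (Matrix (Fin n) (Fin n) E)}

theorem mem_adConj {M : Matrix (Fin n) (Fin n) E} :
    M ∈ adConj g W ↔ ∃ L ∈ W, g * L * g⁻¹ = M := by
  simp [adConj, Submodule.mem_map, mul_assoc]

theorem adConj_le_iff : adConj g V ≤ W ↔ ∀ L ∈ V, g * L * g⁻¹ ∈ W := by
  simp only [SetLike.le_def, mem_adConj, forall_exists_index, and_imp, forall_apply_eq_imp_iff₂]

theorem adConj_mul (g h : Matrix (Fin n) (Fin n) E) (W : Submodule E (Matrix (Fin n) (Fin n) E)) :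
    adConj (g * h) W = adConj g (adConj h W) := by
  rw [adConj, adConj, adConj, ← Submodule.map_comp]
  congr 1
  ext1 M
  simp [Matrix.mul_inv_rev, mul_assoc]

theorem adConj_sup (g : Matrix (Fin n) (Fin n) E)
    (V W : Submodule E (Matrix (Fin n) (Fin n) E)) :
    adConj g (V ⊔ W) = adConj g V ⊔ adConj g W :=
  Submodule.map_sup _ _ _

theorem adConj_inf (hg : IsUnit g.det) (V W : Submodule E (Matrix (Fin n) (Fin n) E)) :
    adConj g (V ⊓ W) = adConj g V ⊓ adConj g W :=
  Submodule.map_inf _ (injective_mulLeft_comp_mulRight_inv hg)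

theorem adConj_eq_self_of_le (hg : IsUnit g.det) (h : adConj g W ≤ W) : adConj g W = W :=
  Submodule.eq_of_le_of_finrank_eq h
    (Submodule.equivMapOfInjective _ (injective_mulLeft_comp_mulRight_inv hg) W).finrank_eq.symm

theorem inf_adConj_eq_adConj_inf (hg : IsUnit g.det) (hV : adConj g V = V)
    (W : Submodule E (Matrix (Fin n) (Fin n) E)) : V ⊓ adConj g W = adConj g (V ⊓ W) := by
  rw [adConj_inf hg, hV]

end AdConj

section LongestElement

variable (E : Type*) [Field E] {n : ℕ}

theorem adConj_permMatrix_entrySub (σ : Equiv.Perm (Fin n)) (P : Fin n → Fin n → Prop) :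
    adConj (σ.permMatrix E) (entrySub E n P) = entrySub E n fun i j => P (σ i) (σ j) := by
  ext M
  simp only [mem_adConj, permMatrix_mul_mul_inv]
  constructor
  · rintro ⟨L, hL, rfl⟩ i j hP
    exact hL _ _ hP
  · intro hM
    refine ⟨M.submatrix σ.symm σ.symm, fun i j hP => hM _ _ (by simpa using hP), ?_⟩
    simp

theorem w0Mat_eq_permMatrix (n : ℕ) :
    w0Mat E n = (Fin.revPerm : Equiv.Perm (Fin n)).permMatrix E := by
  ext i j
  simp [w0Mat, PEquiv.toMatrix_apply, eq_comm]

theorem adConj_w0Mat_upperTri (n : ℕ) : adConj (w0Mat E n) (upperTri E n) = lowerTri E n := by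
  rw [w0Mat_eq_permMatrix, upperTri, lowerTri, adConj_permMatrix_entrySub]
  simp only [Fin.revPerm_apply, Fin.rev_le_rev]

end LongestElement

section Parabolic

variable {E : Type*} [Field E] {n s : ℕ} {β : Fin n → Fin s} {A B b : Matrix (Fin n) (Fin n) E}

theorem mem_parab_iff_blockTriangular : A ∈ parab E β ↔ A.BlockTriangular β := by
  simp only [parab, mem_entrySub, not_le, Matrix.BlockTriangular]

theorem inv_mem_parab (hb : b ∈ parab E β) (hu : IsUnit b.det) : b⁻¹ ∈ parab E β := by
  have := b.invertibleOfIsUnitDet hu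
  rw [mem_parab_iff_blockTriangular] at hb ⊢
  exact Matrix.blockTriangular_inv_of_blockTriangular hb

theorem mul_mem_parab (hA : A ∈ parab E β) (hB : B ∈ parab E β) : A * B ∈ parab E β :=
  mul_mem_entrySub (fun _ _ _ hik hkj => hik.trans hkj) hA hB

theorem mul_mem_nilrad_of_mem_parab_left (hA : A ∈ parab E β) (hB : B ∈ nilrad E β) :
    A * B ∈ nilrad E β :=
  mul_mem_entrySub (fun _ _ _ hik hkj => hik.trans_lt hkj) hA hB

theorem mul_mem_nilrad_of_mem_parab_right (hA : A ∈ nilrad E β) (hB : B ∈ parab E β) :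
    A * B ∈ nilrad E β :=
  mul_mem_entrySub (fun _ _ _ hik hkj => hik.trans_le hkj) hA hB

theorem commutator_mem_nilrad (hA : A ∈ parab E β) (hB : B ∈ centerLevi E β) :
    A * B - B * A ∈ nilrad E β := by
  obtain ⟨c, rfl⟩ := hB
  intro i j hij
  have entry : (A * blockDiagMap E β c - blockDiagMap E β c * A) i j
      = A i j * (c (β j) - c (β i)) := by
    simp only [blockDiagMap, LinearMap.coe_mk, AddHom.coe_mk, Matrix.sub_apply,
      Matrix.mul_diagonal, Matrix.diagonal_mul]
    ring
  rw [entry]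
  rcases (not_lt.1 hij).eq_or_lt with heq | hlt
  · rw [heq, sub_self, mul_zero]
  · rw [hA i j hlt.not_ge, zero_mul]

theorem adConj_parab (hb : b ∈ parab E β) (hu : IsUnit b.det) :
    adConj b (parab E β) = parab E β :=
  adConj_eq_self_of_le hu <| adConj_le_iff.2 fun _ hM =>
    mul_mem_parab (mul_mem_parab hb hM) (inv_mem_parab hb hu)

theorem adConj_nilrad_le (hb : b ∈ parab E β) (hu : IsUnit b.det) :
    adConj b (nilrad E β) ≤ nilrad E β :=
  adConj_le_iff.2 fun _ hN => mul_mem_nilrad_of_mem_parab_right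
    (mul_mem_nilrad_of_mem_parab_left hb hN) (inv_mem_parab hb hu)

theorem adConj_centerLevi_le (hb : b ∈ parab E β) (hu : IsUnit b.det) :
    adConj b (centerLevi E β) ≤ centerLevi E β ⊔ nilrad E β := by
  refine adConj_le_iff.2 fun Z hZ => ?_
  have decomp : b * Z * b⁻¹ = Z + (b * Z - Z * b) * b⁻¹ := by
    rw [sub_mul, Matrix.mul_nonsing_inv_cancel_right _ _ hu, add_sub_cancel]
  rw [decomp]
  exact Submodule.add_mem_sup hZ <|
    mul_mem_nilrad_of_mem_parab_right (commutator_mem_nilrad hb hZ) (inv_mem_parab hb hu)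

theorem adConj_centerLevi_sup_nilrad (hb : b ∈ parab E β) (hu : IsUnit b.det) :
    adConj b (centerLevi E β ⊔ nilrad E β) = centerLevi E β ⊔ nilrad E β := by
  refine adConj_eq_self_of_le hu ?_
  rw [adConj_sup]
  exact sup_le (adConj_centerLevi_le hb hu) ((adConj_nilrad_le hb hu).trans le_sup_right)

variable (E)

theorem centerLevi_le_lowerTri (β : Fin n → Fin s) : centerLevi E β ≤ lowerTri E n := by
  rintro _ ⟨c, rfl⟩ i j hij
  exact Matrix.diagonal_apply_ne _ fun h => hij h.ge

theorem parab_inf_lowerTri (hβ : Monotone β) :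
    parab E β ⊓ lowerTri E n = levi E β ⊓ lowerTri E n := by
  rw [parab, levi, lowerTri, entrySub_inf, entrySub_inf]
  congr! 3 with i j
  exact and_congr_left fun hji => ⟨fun h => h.antisymm (hβ hji), Eq.le⟩

theorem nilrad_inf_lowerTri (hβ : Monotone β) : nilrad E β ⊓ lowerTri E n = ⊥ := by
  rw [nilrad, lowerTri, entrySub_inf]
  exact entrySub_eq_bot fun i j ⟨hlt, hji⟩ => (hβ hji).not_gt hlt

theorem centerLevi_sup_nilrad_inf_lowerTri (hβ : Monotone β) :
    (centerLevi E β ⊔ nilrad E β) ⊓ lowerTri E n = centerLevi E β := by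
  rw [sup_inf_assoc_of_le _ (centerLevi_le_lowerTri E β), nilrad_inf_lowerTri E hβ, sup_bot_eq]

end Parabolic

/-- Let `b ∈ GL_n(E)` be an invertible block upper-triangular matrix.  Then:
(i) `𝔭_{S_0} ∩ Ad_b(𝔟̄) = Ad_b(𝔩_{S_0} ∩ 𝔟̄)`;
(ii) `(𝔷_{S_0} + 𝔫_{S_0}) ∩ Ad_b(𝔟̄) = Ad_b(𝔷_{S_0})`.
Equivalently, for `g = b w₀` one has `𝔭_{S_0} ∩ Ad_g(𝔟) = Ad_b(𝔩_{S_0} ∩ 𝔟̄)` and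
`(𝔷_{S_0} + 𝔫_{S_0}) ∩ Ad_g(𝔟) = Ad_b(𝔷_{S_0})`. -/
theorem statement_4 (E : Type*) [Field E] (n s : ℕ) (hs : 1 ≤ s)
    (β : Fin n → Fin s) (hβmono : Monotone β) (hβsurj : Function.Surjective β)
    (b : Matrix (Fin n) (Fin n) E) (hbunit : IsUnit b.det) (hbpar : b ∈ parab E β) :
    parab E β ⊓ adConj b (lowerTri E n) = adConj b (levi E β ⊓ lowerTri E n) ∧
    (centerLevi E β ⊔ nilrad E β) ⊓ adConj b (lowerTri E n) = adConj b (centerLevi E β) ∧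
    parab E β ⊓ adConj (b * w0Mat E n) (upperTri E n) = adConj b (levi E β ⊓ lowerTri E n) ∧
    (centerLevi E β ⊔ nilrad E β) ⊓ adConj (b * w0Mat E n) (upperTri E n)
      = adConj b (centerLevi E β) := by
  have hparab : parab E β ⊓ adConj b (lowerTri E n) = adConj b (levi E β ⊓ lowerTri E n) := by
    rw [inf_adConj_eq_adConj_inf hbunit (adConj_parab hbpar hbunit), parab_inf_lowerTri E hβmono]
  have hcenter : (centerLevi E β ⊔ nilrad E β) ⊓ adConj b (lowerTri E n)
      = adConj b (centerLevi E β) := by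
    rw [inf_adConj_eq_adConj_inf hbunit (adConj_centerLevi_sup_nilrad hbpar hbunit),
      centerLevi_sup_nilrad_inf_lowerTri E hβmono]
  rw [adConj_mul, adConj_w0Mat_upperTri]
  exact ⟨hparab, hcenter, hparab, hcenter⟩
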